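/- arXiv:0901.0342 — 4 statements merged into one kernel-verified Lean document; each statement's English description precedes it below -/
import Mathlib

section
/- Let r ≥ 1 and let (m₁, m₂) be a commuting pair of r×r complex matrices. Then there exist diagonal matrices d₁, d₂ ∈ M_r(ℂ) such that (d₁, d₂) lies in the topological closure of the GL_r(ℂ)-orbit of (m₁, m₂), and moreover the characteristic polynomial of d₁ equals that of m₁ and the characteristic polynomial of d₂ equals that of m₂. -/
open Matrix

/-- The orbit of a pair of `r × r` complex matrices under the simultaneous
conjugation action of `GL r ℂ`. -/
def conjOrbit (r : ℕ) (m₁ m₂ : Matrix (Fin r) (Fin r) ℂ) :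
    Set (Matrix (Fin r) (Fin r) ℂ × Matrix (Fin r) (Fin r) ℂ) :=
  {p | ∃ g : GL (Fin r) ℂ, p = (g.val * m₁ * g⁻¹.val, g.val * m₂ * g⁻¹.val)}

/-!
A commuting family over an algebraically closed field has a common eigenvector; applied to the
transposed family, this gives an invariant hyperplane, so by induction on the dimension the family
is simultaneously upper triangular in some basis. Conjugating an upper triangular matrix `T` by
`diag(1, t⁻¹, t⁻², …)` multiplies the entry `T i j` by `t ^ (j - i)`, so as `t → 0` the part of `T`
above the diagonal is killed and the diagonal, which determines the characteristic polynomial,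
is kept.
-/

open Module Filter Topology

section CommonEigenvector

variable {ι K V : Type*} [Field K] [IsAlgClosed K] [AddCommGroup V] [Module K V]
  [FiniteDimensional K V] [Nontrivial V]

theorem exists_common_eigenvector_of_commute (f : ι → End K V)
    (hf : ∀ i j, Commute (f i) (f j)) :
    ∃ v ≠ 0, ∃ μ : ι → K, ∀ i, f i v = μ i • v := by
  obtain ⟨W, ⟨hW_ne, hW_inv⟩, hW_min⟩ := exists_minimal_of_wellFoundedLT
    (fun W : Submodule K V ↦ W ≠ ⊥ ∧ ∀ i, W ∈ (f i).invtSubmodule)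
    ⟨⊤, top_ne_bot, fun i ↦ End.invtSubmodule.top_mem (f i)⟩
  have acts_by_scalar (i : ι) : ∃ μ : K, W ≤ (f i).eigenspace μ := by
    have : Nontrivial W := Submodule.nontrivial_iff_ne_bot.mpr hW_ne
    obtain ⟨μ, hμ⟩ := End.exists_eigenvalue ((f i).restrict (hW_inv i))
    obtain ⟨w, hw⟩ := hμ.exists_hasEigenvector
    have hw_mem : (w : V) ∈ W ⊓ (f i).eigenspace μ :=
      ⟨w.2, End.mem_eigenspace_iff.mpr (congrArg Subtype.val hw.apply_eq_smul)⟩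
    have hE_ne : W ⊓ (f i).eigenspace μ ≠ ⊥ :=
      (Submodule.ne_bot_iff _).mpr ⟨w, hw_mem, fun h ↦ hw.2 (Subtype.ext h)⟩
    have hE_inv (j : ι) : W ⊓ (f i).eigenspace μ ∈ (f j).invtSubmodule :=
      End.invtSubmodule.inf_mem (hW_inv j) (End.mapsTo_genEigenspace_of_comm (hf i j) μ 1)
    exact ⟨μ, (hW_min ⟨hE_ne, hE_inv⟩ inf_le_left).trans inf_le_right⟩
  choose μ hμ using acts_by_scalar
  obtain ⟨v, hv, hv_ne⟩ := Submodule.exists_mem_ne_zero_of_ne_bot hW_ne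
  exact ⟨v, hv_ne, μ, fun i ↦ End.mem_eigenspace_iff.mp (hμ i hv)⟩

theorem exists_dual_ne_zero_ker_mem_invtSubmodule_of_commute (f : ι → End K V)
    (hf : ∀ i j, Commute (f i) (f j)) :
    ∃ φ : Dual K V, φ ≠ 0 ∧ ∀ i, LinearMap.ker φ ∈ (f i).invtSubmodule := by
  obtain ⟨φ, hφ, μ, hμ⟩ := exists_common_eigenvector_of_commute
    (fun i ↦ ((f i).dualMap : End K (Dual K V)))
    fun i j ↦ congrArg LinearMap.dualMap (hf j i)
  refine ⟨φ, hφ, fun i x hx ↦ ?_⟩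
  have hφf : φ (f i x) = μ i • φ x := LinearMap.congr_fun (hμ i) x
  simpa [LinearMap.mem_ker.mp hx] using hφf

end CommonEigenvector

section Triangularization

theorem repr_mkFinSnoc_coe {R M : Type*} [Ring R] [AddCommGroup M] [Module R M] {n : ℕ}
    {N : Submodule R M} (b : Basis (Fin n) R N) (y : M)
    (hli : ∀ (c : R), ∀ x ∈ N, c • y + x = 0 → c = 0) (hsp : ∀ z : M, ∃ c : R, z + c • y ∈ N)
    (x : N) : ⇑((Basis.mkFinSnoc b y hli hsp).repr x) = Fin.snoc (α := fun _ ↦ R) (b.repr x) 0 := by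
  have hx : (x : M) = ∑ i, b.repr x i • (b i : M) := by
    simpa only [Submodule.coe_sum, Submodule.coe_smul] using
      congrArg Subtype.val (b.sum_repr x).symm
  have hsnoc : (x : M) = ∑ i : Fin (n + 1), Fin.snoc (α := fun _ ↦ R) (b.repr x) 0 i •
      Basis.mkFinSnoc b y hli hsp i := by
    simpa [Fin.sum_univ_castSucc] using hx
  rw [hsnoc, Basis.repr_sum_self]

theorem isUpperTriangular_toMatrix_mkFinSnoc {R M : Type*} [CommRing R] [AddCommGroup M]
    [Module R M] {n : ℕ} {N : Submodule R M} (b : Basis (Fin n) R N) (y : M)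
    (hli : ∀ (c : R), ∀ x ∈ N, c • y + x = 0 → c = 0) (hsp : ∀ z : M, ∃ c : R, z + c • y ∈ N)
    {f : End R M} (hN : N ∈ f.invtSubmodule)
    (hf : (LinearMap.toMatrix b b (f.restrict hN)).IsUpperTriangular) :
    (LinearMap.toMatrix (Basis.mkFinSnoc b y hli hsp)
      (Basis.mkFinSnoc b y hli hsp) f).IsUpperTriangular := by
  intro i j hij
  obtain ⟨j, rfl⟩ := Fin.exists_castSucc_eq.mpr (Fin.ne_last_of_lt hij)
  have hcol : f (Basis.mkFinSnoc b y hli hsp j.castSucc) = (f.restrict hN (b j) : M) := by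
    rw [Basis.coe_mkFinSnoc, Fin.snoc_castSucc]
    rfl
  rw [LinearMap.toMatrix_apply, hcol, repr_mkFinSnoc_coe]
  cases i using Fin.lastCases with
  | last => exact Fin.snoc_last ..
  | cast i =>
    rw [Fin.snoc_castSucc, ← LinearMap.toMatrix_apply]
    exact hf (Fin.castSucc_lt_castSucc_iff.mp hij)

theorem exists_basis_isUpperTriangular_toMatrix_of_commute {ι K V : Type*} [Field K]
    [IsAlgClosed K] [AddCommGroup V] [Module K V] [FiniteDimensional K V] {n : ℕ}
    (hn : finrank K V = n) (f : ι → End K V) (hf : ∀ i j, Commute (f i) (f j)) :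
    ∃ b : Basis (Fin n) K V, ∀ i, (LinearMap.toMatrix b b (f i)).IsUpperTriangular := by
  induction n generalizing V with
  | zero => exact ⟨finBasisOfFinrankEq K V hn, fun _ i ↦ i.elim0⟩
  | succ n ih =>
    have : Nontrivial V := nontrivial_of_finrank_eq_succ hn
    obtain ⟨φ, hφ, hker⟩ := exists_dual_ne_zero_ker_mem_invtSubmodule_of_commute f hf
    obtain ⟨y, hy⟩ : ∃ y, φ y ≠ 0 := by simpa using DFunLike.ne_iff.mp hφ
    have hker_finrank : finrank K (LinearMap.ker φ) = n := by
      have := Dual.finrank_ker_add_one_of_ne_zero hφ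
      omega
    obtain ⟨b, hb⟩ := ih hker_finrank (fun i ↦ (f i).restrict (hker i))
      fun i j ↦ LinearMap.restrict_commute (hf i j) (hker i) (hker j)
    have hli (c : K) (x : V) (hx : x ∈ LinearMap.ker φ) (h : c • y + x = 0) : c = 0 := by
      have := congrArg φ h
      simpa [LinearMap.mem_ker.mp hx, hy] using this
    have hsp (z : V) : ∃ c : K, z + c • y ∈ LinearMap.ker φ :=
      ⟨-(φ z / φ y), by simp [hy]⟩
    exact ⟨Basis.mkFinSnoc b y hli hsp,
      fun i ↦ isUpperTriangular_toMatrix_mkFinSnoc b y hli hsp (hker i) (hb i)⟩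

theorem exists_conjAct_smul_isUpperTriangular_of_commute {ι K : Type*} [Field K] [IsAlgClosed K]
    {r : ℕ} (m : ι → Matrix (Fin r) (Fin r) K) (hm : ∀ i j, Commute (m i) (m j)) :
    ∃ g : ConjAct (GL (Fin r) K), ∀ i, (g • m i).IsUpperTriangular := by
  obtain ⟨b, hb⟩ := exists_basis_isUpperTriangular_toMatrix_of_commute (finrank_fin_fun K)
    (fun i ↦ (m i).toLin') fun i j ↦ (hm i j).map toLinAlgEquiv'
  let e := Pi.basisFun K (Fin r)
  let g : GL (Fin r) K :=
    ⟨b.toMatrix e, e.toMatrix b, b.toMatrix_mul_toMatrix_flip e, e.toMatrix_mul_toMatrix_flip b⟩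
  refine ⟨ConjAct.toConjAct g, fun i ↦ ?_⟩
  have hconj : ConjAct.toConjAct g • m i = LinearMap.toMatrix b b (m i).toLin' := by
    change b.toMatrix e * m i * e.toMatrix b = _
    rw [← basis_toMatrix_mul_linearMap_toMatrix_mul_basis_toMatrix b e b e,
      LinearMap.toMatrix_eq_toMatrix', LinearMap.toMatrix'_toLin']
  rw [hconj]
  exact hb i

end Triangularization

section Degeneration

variable {n K : Type*} [Fintype n] [LinearOrder n] [Field K] [TopologicalSpace K] [ContinuousMul K]

theorem tendsto_diagonal_pow_conj {w : n → ℕ} (hw : StrictMono w) {T : Matrix n n K}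
    (hT : T.IsUpperTriangular) :
    Tendsto (fun t : K ↦ diagonal (fun i ↦ (t ^ w i)⁻¹) * T * diagonal (fun i ↦ t ^ w i))
      (𝓝[≠] 0) (𝓝 (diagonal T.diag)) := by
  refine tendsto_pi_nhds.mpr fun i ↦ tendsto_pi_nhds.mpr fun j ↦ ?_
  simp only [mul_diagonal, diagonal_mul]
  rcases lt_trichotomy j i with hji | rfl | hij
  · simpa [hT hji, hji.ne'] using tendsto_const_nhds
  · refine tendsto_const_nhds.congr' ?_
    filter_upwards [self_mem_nhdsWithin] with t (ht : t ≠ 0)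
    rw [diagonal_apply_eq, diag_apply, mul_right_comm, inv_mul_cancel₀ (pow_ne_zero _ ht), one_mul]
  · have hpow : Tendsto (fun t : K ↦ T i j * t ^ (w j - w i)) (𝓝[≠] 0) (𝓝 0) := by
      have : Continuous fun t : K ↦ T i j * t ^ (w j - w i) := by fun_prop
      simpa [(Nat.sub_pos_of_lt (hw hij)).ne'] using (this.tendsto 0).mono_left nhdsWithin_le_nhds
    rw [diagonal_apply_ne _ hij.ne]
    refine hpow.congr' ?_
    filter_upwards [self_mem_nhdsWithin] with t (ht : t ≠ 0)
    rw [pow_sub₀ t ht (hw hij).le]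
    ring

theorem diagonal_diag_mem_closure_orbit_of_isUpperTriangular [(𝓝[≠] (0 : K)).NeBot]
    {ι : Type*} {w : n → ℕ} (hw : StrictMono w) {T : ι → Matrix n n K}
    (hT : ∀ i, (T i).IsUpperTriangular) :
    (fun i ↦ diagonal (T i).diag) ∈ closure (MulAction.orbit (ConjAct (GL n K)) T) := by
  refine mem_closure_of_tendsto
    (tendsto_pi_nhds.mpr fun i ↦ tendsto_diagonal_pow_conj hw (hT i)) ?_
  filter_upwards [self_mem_nhdsWithin] with t (ht : t ≠ 0)
  let g : GL n K :=
    ⟨diagonal fun i ↦ (t ^ w i)⁻¹, diagonal fun i ↦ t ^ w i, by simp [ht], by simp [ht]⟩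
  exact ⟨ConjAct.toConjAct g, rfl⟩

end Degeneration

theorem charpoly_diagonal_diag_of_isUpperTriangular {n R : Type*} [Fintype n] [LinearOrder n]
    [CommRing R] {T : Matrix n n R} (hT : T.IsUpperTriangular) :
    (diagonal T.diag).charpoly = T.charpoly := by
  rw [charpoly_diagonal, charpoly_of_isUpperTriangular T hT]
  rfl

theorem charpoly_conjAct_smul {n R : Type*} [Fintype n] [DecidableEq n] [CommRing R]
    (g : ConjAct (GL n R)) (M : Matrix n n R) : (g • M).charpoly = M.charpoly := by
  rw [ConjAct.units_smul_def, coe_units_inv, charpoly_units_conj]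

theorem stmt1_general {ι K : Type*} [Field K] [IsAlgClosed K] [TopologicalSpace K]
    [ContinuousMul K] [(𝓝[≠] (0 : K)).NeBot] {r : ℕ} (m : ι → Matrix (Fin r) (Fin r) K)
    (hm : ∀ i j, Commute (m i) (m j)) :
    ∃ d : ι → Matrix (Fin r) (Fin r) K, (∀ i, (d i).IsDiag) ∧
      d ∈ closure (MulAction.orbit (ConjAct (GL (Fin r) K)) m) ∧
      ∀ i, (d i).charpoly = (m i).charpoly := by
  obtain ⟨g, hg⟩ := exists_conjAct_smul_isUpperTriangular_of_commute m hm
  refine ⟨fun i ↦ diagonal (g • m i).diag, fun i ↦ isDiag_diagonal _, ?_, fun i ↦ ?_⟩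
  · rw [← MulAction.orbit_smul g m]
    exact diagonal_diag_mem_closure_orbit_of_isUpperTriangular Fin.val_strictMono hg
  · rw [charpoly_diagonal_diag_of_isUpperTriangular (hg i), charpoly_conjAct_smul]

theorem mem_closure_conjOrbit_of_mem_closure_orbit {r : ℕ}
    {m₁ m₂ : Matrix (Fin r) (Fin r) ℂ} {d : Fin 2 → Matrix (Fin r) (Fin r) ℂ}
    (hd : d ∈ closure (MulAction.orbit (ConjAct (GL (Fin r) ℂ)) ![m₁, m₂])) :
    (d 0, d 1) ∈ closure (conjOrbit r m₁ m₂) := by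
  refine map_mem_closure (f := fun p ↦ (p 0, p 1)) (by fun_prop) hd ?_
  rintro _ ⟨g, rfl⟩
  exact ⟨ConjAct.ofConjAct g, rfl⟩

/-- The closure of the `GL r ℂ`-orbit of a commuting pair of matrices contains a pair of
diagonal matrices with the same characteristic polynomials as the original pair. -/
theorem stmt1 (r : ℕ) (hr : 1 ≤ r) (m₁ m₂ : Matrix (Fin r) (Fin r) ℂ)
    (hcomm : m₁ * m₂ = m₂ * m₁) :
    ∃ d₁ d₂ : Matrix (Fin r) (Fin r) ℂ, d₁.IsDiag ∧ d₂.IsDiag ∧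
      (d₁, d₂) ∈ closure (conjOrbit r m₁ m₂) ∧
      d₁.charpoly = m₁.charpoly ∧ d₂.charpoly = m₂.charpoly := by
  have hm : Commute m₁ m₂ := hcomm
  obtain ⟨d, hdiag, hmem, hχ⟩ := stmt1_general ![m₁, m₂]
    (by simpa [Fin.forall_fin_two] using And.intro hm hm.symm)
  exact ⟨d 0, d 1, hdiag 0, hdiag 1, mem_closure_conjOrbit_of_mem_closure_orbit hmem, hχ 0, hχ 1⟩
end

section
/- Let r ≥ 1 and let (m₁, m₂) be a commuting pair of r×r complex matrices. If O₁ and O₂ are GL_r(ℂ)-orbits of pairs of matrices that are contained in the topological closure of the orbit of (m₁, m₂), and both O₁ and O₂ are closed subsets of M_r(ℂ) × M_r(ℂ), then O₁ = O₂. In other words, the closure of every orbit of a commuting pair contains a unique closed orbit. -/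
open Matrix

/-! Commuting matrices over an algebraically closed field are simultaneously triangular in some
basis. Conjugating a triangular family by the one-parameter subgroup `diagonal (t ^ w)⁻¹` with
strictly increasing weights and letting `t → 0` kills the off-diagonal entries, so a closed orbit
of commuting matrices contains a family of diagonal matrices.

The characteristic polynomials of all linear combinations of the family are continuous and
invariant under conjugation, hence constant on the closure of an orbit. Since a generic linear
combination separates finitely many joint eigenvalues, these polynomials determine the multiset of
joint eigenvalues of a diagonal family, and diagonal families with the same multiset are conjugate
by a permutation matrix. -/

open MulAction Topology

section CommutingFamilies

variable {ι K V : Type*} [Field K] [AddCommGroup V] [Module K V]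

lemma exists_forall_apply_eq_smul_of_commute [IsAlgClosed K] [FiniteDimensional K V] [Nontrivial V]
    (f : ι → Module.End K V) (hf : ∀ i j, Commute (f i) (f j)) :
    ∃ v ≠ 0, ∃ χ : ι → K, ∀ i, f i v = χ i • v := by
  obtain ⟨W, ⟨hW₀, hWf⟩, hWmin⟩ := exists_minimal_of_wellFoundedLT
    (fun W : Submodule K V ↦ W ≠ ⊥ ∧ ∀ i, W ∈ (f i).invtSubmodule)
    ⟨⊤, top_ne_bot, fun i ↦ Module.End.invtSubmodule.top_mem (f i)⟩
  -- By minimality `W` lies in an eigenspace of every `f i`.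
  have hscalar (i : ι) : ∃ μ : K, W ≤ (f i).eigenspace μ := by
    have : Nontrivial W := Submodule.nontrivial_iff_ne_bot.2 hW₀
    obtain ⟨μ, hμ⟩ := Module.End.exists_eigenvalue ((f i).restrict (hWf i))
    obtain ⟨w, hw, hw₀⟩ := hμ.exists_hasEigenvector
    have hwμ : (w : V) ∈ (f i).eigenspace μ :=
      Module.End.mem_eigenspace_iff.2 (congrArg Subtype.val (Module.End.mem_eigenspace_iff.1 hw))
    refine ⟨μ, (hWmin (y := (f i).eigenspace μ ⊓ W) ⟨?_, fun j ↦ ?_⟩ inf_le_right).trans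
      inf_le_left⟩
    · exact (Submodule.ne_bot_iff _).2 ⟨w, ⟨hwμ, w.2⟩, by simpa using hw₀⟩
    · exact Module.End.invtSubmodule.inf_mem
        (Module.End.mapsTo_genEigenspace_of_comm (hf i j) μ 1) (hWf j)
  choose χ hχ using hscalar
  obtain ⟨w, hwW, hw₀⟩ := W.exists_mem_ne_zero_of_ne_bot hW₀
  exact ⟨w, hw₀, χ, fun i ↦ Module.End.mem_eigenspace_iff.1 (hχ i hwW)⟩

lemma exists_dual_ker_mem_invtSubmodule_of_commute [IsAlgClosed K] [FiniteDimensional K V]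
    [Nontrivial V] (f : ι → Module.End K V) (hf : ∀ i j, Commute (f i) (f j)) :
    ∃ φ : Module.Dual K V, φ ≠ 0 ∧ ∀ i, LinearMap.ker φ ∈ (f i).invtSubmodule := by
  have hcomm (i j : ι) : Commute ((f i).dualMap : Module.End K (Module.Dual K V)) (f j).dualMap :=
    LinearMap.ext fun φ ↦ LinearMap.ext fun v ↦ congrArg φ (LinearMap.congr_fun (hf j i).eq v)
  obtain ⟨φ, hφ₀, χ, hφ⟩ :=
    exists_forall_apply_eq_smul_of_commute (fun i ↦ (f i).dualMap) hcomm
  refine ⟨φ, hφ₀, fun i v hv ↦ ?_⟩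
  have hφv : φ (f i v) = χ i * φ v := LinearMap.congr_fun (hφ i) v
  rw [LinearMap.mem_ker] at hv
  rw [Submodule.mem_comap, LinearMap.mem_ker, hφv, hv, mul_zero]

lemma flag_castSucc_mkFinSnoc {R M : Type*} [Ring R] [AddCommGroup M] [Module R M] {n : ℕ}
    {N : Submodule R M} (b : Module.Basis (Fin n) R N) (y : M)
    (hli : ∀ c : R, ∀ x ∈ N, c • y + x = 0 → c = 0) (hsp : ∀ z : M, ∃ c : R, z + c • y ∈ N)
    (k : Fin (n + 1)) :
    (Module.Basis.mkFinSnoc b y hli hsp).flag k.castSucc = (b.flag k).map N.subtype := by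
  rw [Module.Basis.flag, Module.Basis.flag, Submodule.map_span, Module.Basis.coe_mkFinSnoc]
  congr 1
  ext v
  simp only [Set.mem_image, Set.mem_ofPred_eq, exists_exists_and_eq_and]
  constructor
  · rintro ⟨i, hi, rfl⟩
    induction i using Fin.lastCases with
    | last => exact absurd hi (by simp [Fin.le_last])
    | cast i => exact ⟨i, by simpa using hi, by simp⟩
  · rintro ⟨i, hi, rfl⟩
    exact ⟨i.castSucc, by simpa using hi, by simp⟩

lemma exists_basis_extending_ker {n : ℕ} {φ : Module.Dual K V} (hφ : φ ≠ 0)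
    (b : Module.Basis (Fin n) K (LinearMap.ker φ)) :
    ∃ B : Module.Basis (Fin (n + 1)) K V,
      ∀ k : Fin (n + 1), B.flag k.castSucc = (b.flag k).map (LinearMap.ker φ).subtype := by
  obtain ⟨y, hy⟩ : ∃ y, φ y ≠ 0 := DFunLike.ne_iff.1 hφ
  refine ⟨.mkFinSnoc b y (fun c x hx hcx ↦ ?_) fun z ↦ ⟨-(φ z / φ y), ?_⟩,
    flag_castSucc_mkFinSnoc b y _ _⟩
  · simpa [LinearMap.mem_ker.1 hx, hy] using congrArg φ hcx
  · simp [hy]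

theorem exists_basis_flag_mem_invtSubmodule_of_commute [IsAlgClosed K] [FiniteDimensional K V]
    {n : ℕ} (hn : Module.finrank K V = n) (f : ι → Module.End K V)
    (hf : ∀ i j, Commute (f i) (f j)) :
    ∃ b : Module.Basis (Fin n) K V, ∀ i k, b.flag k ∈ (f i).invtSubmodule := by
  induction n generalizing V with
  | zero =>
    refine ⟨Module.finBasisOfFinrankEq K V hn, fun i k ↦ ?_⟩
    rw [Fin.fin_one_eq_zero k, Module.Basis.flag_zero]
    exact Module.End.invtSubmodule.bot_mem (f i)
  | succ n ih =>
    have : Nontrivial V := Module.nontrivial_of_finrank_pos (R := K) (by omega)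
    obtain ⟨φ, hφ₀, hφf⟩ := exists_dual_ker_mem_invtSubmodule_of_commute f hf
    have hker : Module.finrank K (LinearMap.ker φ) = n := by
      have := Module.Dual.finrank_ker_add_one_of_ne_zero hφ₀
      omega
    obtain ⟨b, hb⟩ := ih hker (fun i ↦ (f i).restrict (hφf i))
      fun i j ↦ LinearMap.restrict_commute (hf i j) (hφf i) (hφf j)
    obtain ⟨B, hB⟩ := exists_basis_extending_ker hφ₀ b
    refine ⟨B, fun i k ↦ ?_⟩
    induction k using Fin.lastCases with
    | last =>
      rw [Module.Basis.flag_last]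
      exact Module.End.invtSubmodule.top_mem (f i)
    | cast k =>
      rw [hB]
      exact Module.End.invtSubmodule.map_subtype_mem_of_mem_invtSubmodule (f i) (hφf i) (hb i k)

end CommutingFamilies

section Triangularization

lemma blockTriangular_toMatrix_of_flag_mem_invtSubmodule {R M : Type*} [CommRing R]
    [AddCommGroup M] [Module R M] {n : ℕ} {f : Module.End R M} (b : Module.Basis (Fin n) R M)
    (hf : ∀ k, b.flag k ∈ f.invtSubmodule) :
    (LinearMap.toMatrix b b f).BlockTriangular id := by
  intro i j hji
  have hfj : f (b j) ∈ b.flag j.succ := hf j.succ (b.self_mem_flag Fin.castSucc_lt_succ)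
  simpa [LinearMap.toMatrix_apply] using
    b.flag_le_ker_coord (Fin.succ_le_castSucc_iff.2 hji) hfj

variable {ι n K R : Type*} [Fintype n] [DecidableEq n] [Field K] [CommRing R]

lemma exists_conjAct_smul_eq_toMatrix (b : Module.Basis n R (n → R)) :
    ∃ g : ConjAct (GL n R), ∀ M : Matrix n n R,
      g • M = LinearMap.toMatrix b b (Matrix.toLin' M) := by
  let c := Pi.basisFun R n
  refine ⟨.toConjAct ⟨b.toMatrix c, c.toMatrix b, b.toMatrix_mul_toMatrix_flip c,
    c.toMatrix_mul_toMatrix_flip b⟩, fun M ↦ ?_⟩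
  have hc : LinearMap.toMatrix c c (Matrix.toLin' M) = M := LinearMap.toMatrix'_toLin' M
  rw [← basis_toMatrix_mul_linearMap_toMatrix_mul_basis_toMatrix b c b c, hc]
  rfl

theorem exists_conjAct_smul_blockTriangular_of_commute [IsAlgClosed K] (A : ι → Matrix n n K)
    (hA : ∀ i j, Commute (A i) (A j)) :
    ∃ (g : ConjAct (GL n K)) (w : n → ℕ), w.Injective ∧ ∀ i, ((g • A) i).BlockTriangular w := by
  obtain ⟨b, hb⟩ := exists_basis_flag_mem_invtSubmodule_of_commute
    (Module.finrank_fintype_fun_eq_card K) (fun i ↦ Matrix.toLin' (A i))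
    fun i j ↦ (hA i j).map Matrix.toLinAlgEquiv'
  let e := Fintype.equivFin n
  obtain ⟨g, hg⟩ := exists_conjAct_smul_eq_toMatrix (b.reindex e.symm)
  refine ⟨g, fun k ↦ e k, Fin.val_injective.comp e.injective, fun i j k hkj ↦ ?_⟩
  have := blockTriangular_toMatrix_of_flag_mem_invtSubmodule b (hb i) hkj
  simpa [hg, LinearMap.toMatrix_apply] using this

end Triangularization

section Degeneration

variable {ι n K R : Type*} [Field K] [Semiring R]

/-- The conjugate of `T` by the one-parameter subgroup `t ↦ diagonal (t ^ w)⁻¹`, whose `(i, j)`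
entry is `t ^ (w j - w i) * T i j`, in a form that extends to `t = 0` and so exhibits the diagonal
of `T` as a limit of conjugates. The truncated subtraction only affects entries with `w j < w i`,
which vanish when `T.BlockTriangular w`. -/
def weightScaling (w : n → ℕ) (T : Matrix n n R) (t : R) : Matrix n n R :=
  .of fun i j ↦ t ^ (w j - w i) * T i j

lemma continuous_weightScaling [TopologicalSpace R] [IsTopologicalSemiring R] (w : n → ℕ)
    (T : Matrix n n R) : Continuous (weightScaling w T) :=
  continuous_matrix fun i j ↦ by
    simp only [weightScaling, Matrix.of_apply]
    fun_prop

variable [DecidableEq n]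

lemma weightScaling_zero {w : n → ℕ} (hw : w.Injective) {T : Matrix n n R}
    (hT : T.BlockTriangular w) : weightScaling w T 0 = .diagonal T.diag := by
  ext i j
  rcases lt_trichotomy (w i) (w j) with hij | hij | hij
  · have hne : i ≠ j := fun h ↦ hij.ne (congrArg w h)
    simp [weightScaling, hne, Nat.sub_ne_zero_of_lt hij]
  · simp [weightScaling, hw hij]
  · have hne : i ≠ j := fun h ↦ hij.ne' (congrArg w h)
    simp [weightScaling, hne, hT hij]

variable [Fintype n]

lemma exists_conjAct_smul_eq_weightScaling (w : n → ℕ) {t : K} (ht : t ≠ 0) :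
    ∃ g : ConjAct (GL n K), ∀ T : Matrix n n K, T.BlockTriangular w →
      g • T = weightScaling w T t := by
  refine ⟨.toConjAct ⟨.diagonal fun i ↦ (t ^ w i)⁻¹, .diagonal fun i ↦ t ^ w i, ?_, ?_⟩,
    fun T hT ↦ ?_⟩
  · simp [ht]
  · simp [ht]
  · ext i j
    rw [ConjAct.units_smul_def]
    simp only [ConjAct.ofConjAct_toConjAct, Units.inv_mk, Matrix.mul_diagonal,
      Matrix.diagonal_mul, weightScaling, Matrix.of_apply]
    rcases lt_or_ge (w j) (w i) with hij | hij
    · simp [hT hij]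
    · rw [pow_sub₀ t ht hij]
      ring

variable [TopologicalSpace K] [IsTopologicalRing K] [(𝓝[≠] (0 : K)).NeBot]

lemma diagonal_diag_mem_closure_orbit {w : n → ℕ} (hw : w.Injective)
    {T : ι → Matrix n n K} (hT : ∀ i, (T i).BlockTriangular w) :
    (fun i ↦ .diagonal (T i).diag) ∈ closure (orbit (ConjAct (GL n K)) T) := by
  have hcont : Continuous fun t i ↦ weightScaling w (T i) t :=
    continuous_pi fun i ↦ continuous_weightScaling w (T i)
  have hlim := hcont.tendsto 0
  simp only [weightScaling_zero hw (hT _)] at hlim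
  refine mem_closure_of_tendsto (hlim.mono_left (nhdsWithin_le_nhds (s := {0}ᶜ)))
    (eventually_nhdsWithin_of_forall fun t ht ↦ ?_)
  obtain ⟨g, hg⟩ := exists_conjAct_smul_eq_weightScaling w ht
  exact ⟨g, funext fun i ↦ hg (T i) (hT i)⟩

theorem exists_diagonal_mem_orbit_of_isClosed [IsAlgClosed K] {A : ι → Matrix n n K}
    (hA : ∀ i j, Commute (A i) (A j))
    (hcl : IsClosed (orbit (ConjAct (GL n K)) A)) :
    ∃ d : ι → n → K, (fun i ↦ .diagonal (d i)) ∈ orbit (ConjAct (GL n K)) A := by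
  obtain ⟨g, w, hw, hgA⟩ := exists_conjAct_smul_blockTriangular_of_commute A hA
  have hmem := diagonal_diag_mem_closure_orbit hw hgA
  rw [orbit_eq_iff.2 (mem_orbit A g), hcl.closure_eq] at hmem
  exact ⟨_, hmem⟩

end Degeneration

section Invariants

variable {ι n R : Type*} [Fintype n] [DecidableEq n] [CommRing R]

lemma charpoly_linearCombination_smul (g : ConjAct (GL n R)) (A : ι → Matrix n n R) (c : ι →₀ R) :
    (Finsupp.linearCombination R (g • A) c).charpoly =
      (Finsupp.linearCombination R A c).charpoly := by
  have hsmul : Finsupp.linearCombination R (g • A) c = g • Finsupp.linearCombination R A c := by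
    simp [Finsupp.linearCombination_apply, Finsupp.sum, ConjAct.units_smul_def, Finset.mul_sum,
      Finset.sum_mul]
  rw [hsmul, ConjAct.units_smul_def, Matrix.coe_units_inv, Matrix.charpoly_units_conj]

variable [TopologicalSpace R] [IsTopologicalRing R] [T2Space R]

lemma charpoly_linearCombination_eq_of_mem_closure_orbit [IsDomain R] [Infinite R]
    {A B : ι → Matrix n n R} (hB : B ∈ closure (orbit (ConjAct (GL n R)) A)) (c : ι →₀ R) :
    (Finsupp.linearCombination R B c).charpoly = (Finsupp.linearCombination R A c).charpoly := by
  refine Polynomial.funext fun x ↦ ?_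
  have hcont : Continuous fun X : ι → Matrix n n R ↦
      (Finsupp.linearCombination R X c).charpoly.eval x := by
    simp only [Matrix.eval_charpoly, Finsupp.linearCombination_apply, Finsupp.sum]
    fun_prop
  refine closure_minimal ?_ (isClosed_eq hcont continuous_const) hB
  rintro _ ⟨g, rfl⟩
  exact congrArg (Polynomial.eval x) (charpoly_linearCombination_smul g A c)

lemma commute_of_mem_closure_orbit {A B : ι → Matrix n n R} (hA : ∀ i j, Commute (A i) (A j))
    (hB : B ∈ closure (orbit (ConjAct (GL n R)) A)) (i j : ι) : Commute (B i) (B j) := by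
  have hcl : IsClosed {X : ι → Matrix n n R | X i * X j = X j * X i} :=
    isClosed_eq (by fun_prop) (by fun_prop)
  refine closure_minimal ?_ hcl hB
  rintro _ ⟨g, rfl⟩
  exact (hA i j).map (MulDistribMulAction.toMonoidHom (Matrix n n R) g)

end Invariants

section DiagonalFamilies

lemma exists_perm_of_map_univ_eq {n α : Type*} [Fintype n] {u v : n → α}
    (h : Finset.univ.val.map u = Finset.univ.val.map v) :
    ∃ σ : Equiv.Perm n, ∀ k, v (σ k) = u k := by
  classical
  have hfiber (a : α) : Nonempty ({k // u k = a} ≃ {k // v k = a}) := by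
    have hcount := congrArg (Multiset.count a) h
    simp only [Multiset.count_map, eq_comm (a := a)] at hcount
    refine ⟨Fintype.equivOfCardEq ?_⟩
    rw [Fintype.card_subtype, Fintype.card_subtype]
    exact hcount
  exact ⟨.ofFiberEquiv fun a ↦ (hfiber a).some, Equiv.ofFiberEquiv_map _⟩

lemma exists_linearCombination_separating {ι κ K : Type*} [Field K] [Infinite K] [Finite κ]
    (v : κ → ι → K) :
    ∃ c : ι →₀ K, ∀ k l,
      Finsupp.linearCombination K (v k) c = Finsupp.linearCombination K (v l) c → v k = v l := by
  obtain ⟨c, hc⟩ := Module.Dual.exists_forall_ne_zero_of_forall_exists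
    (fun p : {p : κ × κ // v p.1 ≠ v p.2} ↦
      Finsupp.linearCombination K (v p.1.1) - Finsupp.linearCombination K (v p.1.2)) fun p ↦ by
        obtain ⟨i, hi⟩ := Function.ne_iff.1 p.2
        exact ⟨.single i 1, by simpa [sub_eq_zero] using hi⟩
  refine ⟨c, fun k l hkl ↦ ?_⟩
  by_contra hne
  exact hc ⟨(k, l), hne⟩ (by simp [hkl])

lemma linearCombination_diagonal {ι n R : Type*} [DecidableEq n] [Semiring R] (d : ι → n → R)
    (c : ι →₀ R) :
    Finsupp.linearCombination R (fun i ↦ Matrix.diagonal (d i)) c =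
      .diagonal fun k ↦ Finsupp.linearCombination R (fun i ↦ d i k) c := by
  ext k l
  rcases eq_or_ne k l with rfl | hkl
  · simp [Finsupp.linearCombination_apply, Finsupp.sum, Matrix.sum_apply]
  · simp [Finsupp.linearCombination_apply, Finsupp.sum, Matrix.sum_apply, hkl]

variable {ι n K R : Type*} [Fintype n] [DecidableEq n] [Field K] [CommRing R]

lemma roots_charpoly_diagonal [IsDomain R] (u : n → R) :
    (Matrix.diagonal u).charpoly.roots = Finset.univ.val.map u := by
  rw [Matrix.charpoly_diagonal, ← Polynomial.roots_multiset_prod_X_sub_C (Finset.univ.val.map u),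
    Multiset.map_map]
  rfl

theorem exists_perm_of_charpoly_linearCombination_diagonal_eq [Infinite K] {d e : ι → n → K}
    (h : ∀ c : ι →₀ K, (Finsupp.linearCombination K (fun i ↦ Matrix.diagonal (d i)) c).charpoly =
      (Finsupp.linearCombination K (fun i ↦ Matrix.diagonal (e i)) c).charpoly) :
    ∃ σ : Equiv.Perm n, ∀ i, e i ∘ σ = d i := by
  obtain ⟨c, hc⟩ := exists_linearCombination_separating (Sum.elim (fun k i ↦ e i k) fun k i ↦ d i k)
  have hroots := congrArg Polynomial.roots (h c)
  simp only [linearCombination_diagonal, roots_charpoly_diagonal] at hroots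
  obtain ⟨σ, hσ⟩ := exists_perm_of_map_univ_eq hroots
  exact ⟨σ, fun i ↦ funext fun k ↦ congrFun (hc (.inl (σ k)) (.inr k) (hσ k)) i⟩

lemma submatrix_perm_mem_orbit (σ : Equiv.Perm n) (A : ι → Matrix n n R) :
    (fun i ↦ (A i).submatrix σ σ) ∈ orbit (ConjAct (GL n R)) A := by
  refine ⟨.toConjAct ⟨σ.permMatrix R, σ⁻¹.permMatrix R, ?_, ?_⟩, funext fun i ↦ ?_⟩
  · rw [← Matrix.permMatrix_mul, inv_mul_cancel, Matrix.permMatrix_one]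
  · rw [← Matrix.permMatrix_mul, mul_inv_cancel, Matrix.permMatrix_one]
  · simp [ConjAct.units_smul_def, PEquiv.toMatrix_toPEquiv_mul, PEquiv.mul_toMatrix_toPEquiv,
      Equiv.Perm.inv_def]

end DiagonalFamilies

theorem stmt2_general {ι n K : Type*} [Fintype n] [DecidableEq n] [Field K] [IsAlgClosed K]
    [TopologicalSpace K] [IsTopologicalRing K] [T2Space K] [(𝓝[≠] (0 : K)).NeBot]
    {A B C : ι → Matrix n n K} (hA : ∀ i j, Commute (A i) (A j))
    (hB : B ∈ closure (orbit (ConjAct (GL n K)) A)) (hC : C ∈ closure (orbit (ConjAct (GL n K)) A))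
    (hBcl : IsClosed (orbit (ConjAct (GL n K)) B)) (hCcl : IsClosed (orbit (ConjAct (GL n K)) C)) :
    orbit (ConjAct (GL n K)) B = orbit (ConjAct (GL n K)) C := by
  obtain ⟨d, g, hd⟩ := exists_diagonal_mem_orbit_of_isClosed
    (commute_of_mem_closure_orbit hA hB) hBcl
  obtain ⟨e, h, he⟩ := exists_diagonal_mem_orbit_of_isClosed
    (commute_of_mem_closure_orbit hA hC) hCcl
  have : Infinite K := IsAlgClosed.instInfinite
  obtain ⟨σ, hσ⟩ : ∃ σ : Equiv.Perm n, ∀ i, e i ∘ σ = d i := by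
    refine exists_perm_of_charpoly_linearCombination_diagonal_eq fun c ↦ ?_
    simp only at hd he
    rw [← hd, ← he, charpoly_linearCombination_smul, charpoly_linearCombination_smul,
      charpoly_linearCombination_eq_of_mem_closure_orbit hB,
      charpoly_linearCombination_eq_of_mem_closure_orbit hC]
  have hde := submatrix_perm_mem_orbit (R := K) σ fun i ↦ .diagonal (e i)
  simp only [Matrix.submatrix_diagonal_equiv, hσ] at hde
  calc orbit (ConjAct (GL n K)) B = orbit _ fun i ↦ .diagonal (d i) := (orbit_eq_iff.2 ⟨g, hd⟩).symm
    _ = orbit _ fun i ↦ .diagonal (e i) := orbit_eq_iff.2 hde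
    _ = orbit _ C := orbit_eq_iff.2 ⟨h, he⟩

lemma conjOrbit_eq_image_orbit (r : ℕ) (m₁ m₂ : Matrix (Fin r) (Fin r) ℂ) :
    conjOrbit r m₁ m₂ = Homeomorph.finTwoArrow '' orbit (ConjAct (GL (Fin r) ℂ)) ![m₁, m₂] := by
  ext p
  simp only [orbit, ← Set.range_comp, Set.mem_range]
  exact exists_congr fun g ↦ eq_comm

lemma isClosed_conjOrbit_iff {r : ℕ} {m₁ m₂ : Matrix (Fin r) (Fin r) ℂ} :
    IsClosed (conjOrbit r m₁ m₂) ↔ IsClosed (orbit (ConjAct (GL (Fin r) ℂ)) ![m₁, m₂]) := by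
  rw [conjOrbit_eq_image_orbit, Homeomorph.isClosed_image]

lemma mem_closure_orbit_of_conjOrbit_subset {r : ℕ} {m₁ m₂ n₁ n₂ : Matrix (Fin r) (Fin r) ℂ}
    (h : conjOrbit r n₁ n₂ ⊆ closure (conjOrbit r m₁ m₂)) :
    ![n₁, n₂] ∈ closure (orbit (ConjAct (GL (Fin r) ℂ)) ![m₁, m₂]) := by
  rw [conjOrbit_eq_image_orbit, conjOrbit_eq_image_orbit, ← Homeomorph.image_closure,
    Set.image_subset_image_iff (Homeomorph.injective _)] at h
  exact h (mem_orbit_self _)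

lemma commute_vecCons_pair {M : Type*} [Mul M] {x y : M} (h : Commute x y) (i j : Fin 2) :
    Commute (![x, y] i) (![x, y] j) := by
  fin_cases i <;> fin_cases j
  exacts [.refl x, h, h.symm, .refl y]

/-- The closure of the `GL r ℂ`-orbit of a commuting pair of matrices contains a
unique closed orbit: any two closed orbits contained in this closure coincide. -/
theorem stmt2 (r : ℕ) (hr : 1 ≤ r) (m₁ m₂ : Matrix (Fin r) (Fin r) ℂ)
    (hcomm : m₁ * m₂ = m₂ * m₁) (n₁ n₂ n₁' n₂' : Matrix (Fin r) (Fin r) ℂ)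
    (hsub₁ : conjOrbit r n₁ n₂ ⊆ closure (conjOrbit r m₁ m₂))
    (hsub₂ : conjOrbit r n₁' n₂' ⊆ closure (conjOrbit r m₁ m₂))
    (hcl₁ : IsClosed (conjOrbit r n₁ n₂)) (hcl₂ : IsClosed (conjOrbit r n₁' n₂')) :
    conjOrbit r n₁ n₂ = conjOrbit r n₁' n₂' := by
  rw [conjOrbit_eq_image_orbit, conjOrbit_eq_image_orbit, stmt2_general
    (commute_vecCons_pair hcomm) (mem_closure_orbit_of_conjOrbit_subset hsub₁)
    (mem_closure_orbit_of_conjOrbit_subset hsub₂) (isClosed_conjOrbit_iff.1 hcl₁)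
    (isClosed_conjOrbit_iff.1 hcl₂)]
end

section
/- Let r ≥ 1, let (m₁, m₂) be a commuting pair of r×r complex matrices admitting a cyclic vector v ∈ ℂʳ. Then every matrix c ∈ M_r(ℂ) with c m₁ = m₁ c and c m₂ = m₂ c belongs to Algebra.adjoin ℂ {m₁, m₂}. That is, the commutant of {m₁, m₂} in M_r(ℂ) coincides with the unital subalgebra generated by m₁ and m₂ (and hence has ℂ-dimension r). -/
open Matrix

/-- `v` is a cyclic vector for the pair `(m₁, m₂)`: the orbit of `v` under the unital
subalgebra of `M_r(ℂ)` generated by `m₁` and `m₂` is all of `ℂʳ`. -/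
def CyclicVec (r : ℕ) (m₁ m₂ : Matrix (Fin r) (Fin r) ℂ) (v : Fin r → ℂ) : Prop :=
  {w | ∃ a ∈ Algebra.adjoin ℂ {m₁, m₂}, Matrix.mulVec a v = w} = Set.univ

/-!
If `c` commutes with `S` and `S` is commutative, pick `a ∈ S` with `a • x = c • x`, where `x` is a
cyclic vector. Both `a` and `c` commute with `S`, so they agree on every `b • x` with `b ∈ S`, hence
everywhere, and `c = a ∈ S` by faithfulness.
-/

section Action

variable {A X : Type*} [Semigroup A] [SemigroupAction A X] {S : Set A} {x : X}

theorem smul_eq_smul_of_mem_centralizer (hx : (· • x) '' S = Set.univ) {c d : A}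
    (hc : c ∈ S.centralizer) (hd : d ∈ S.centralizer) (hcd : c • x = d • x) (y : X) :
    c • y = d • y := by
  obtain ⟨b, hb, rfl⟩ : y ∈ (· • x) '' S := hx ▸ Set.mem_univ y
  calc
    c • b • x = b • c • x := by rw [← mul_smul, ← hc b hb, mul_smul]
    _ = b • d • x := by rw [hcd]
    _ = d • b • x := by rw [← mul_smul, hd b hb, mul_smul]

theorem injOn_smul_centralizer [FaithfulSMul A X] (hx : (· • x) '' S = Set.univ) :
    Set.InjOn (· • x) S.centralizer := fun _ hc _ hd hcd ↦
  FaithfulSMul.eq_of_smul_eq_smul (smul_eq_smul_of_mem_centralizer hx hc hd hcd)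

theorem centralizer_eq_of_image_smul_eq_univ [FaithfulSMul A X] (hS : S ⊆ S.centralizer)
    (hx : (· • x) '' S = Set.univ) : S.centralizer = S := by
  refine Set.Subset.antisymm (fun c hc ↦ ?_) hS
  obtain ⟨a, ha, hac⟩ : c • x ∈ (· • x) '' S := hx ▸ Set.mem_univ (c • x)
  exact injOn_smul_centralizer hx (hS ha) hc hac ▸ ha

end Action

section Adjoin

variable {R A : Type*} [CommSemiring R] [Semiring A] [Algebra R A] {s : Set A}

variable (R s) in
theorem centralizer_adjoin :
    Subalgebra.centralizer R (Algebra.adjoin R s : Set A) = Subalgebra.centralizer R s :=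
  le_antisymm (Subalgebra.centralizer_le R _ _ Algebra.subset_adjoin) fun _ hc _ hb ↦
    (Algebra.adjoin_le_centralizer_centralizer R s hb _ hc).symm

theorem adjoin_le_centralizer_adjoin (hs : s ⊆ s.centralizer) :
    Algebra.adjoin R s ≤ Subalgebra.centralizer R (Algebra.adjoin R s : Set A) := by
  rw [centralizer_adjoin]
  exact Algebra.adjoin_le hs

theorem stmt11_general {X : Type*} [MulAction A X] [FaithfulSMul A X] {x : X}
    (hs : s ⊆ s.centralizer) (hx : (· • x) '' (Algebra.adjoin R s : Set A) = Set.univ) :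
    Subalgebra.centralizer R s = Algebra.adjoin R s := by
  rw [← centralizer_adjoin R s]
  exact SetLike.coe_injective
    (centralizer_eq_of_image_smul_eq_univ (adjoin_le_centralizer_adjoin hs) hx)

end Adjoin

theorem pair_subset_centralizer_iff {A : Type*} [Mul A] {a b : A} :
    ({a, b} : Set A) ⊆ Set.centralizer {a, b} ↔ a * b = b * a := by
  simp [Set.insert_subset_iff, Set.mem_centralizer_iff, eq_comm (a := b * a)]

instance instFaithfulSMulMatrix {n R : Type*} [Fintype n] [DecidableEq n] [Semiring R] :
    FaithfulSMul (Matrix n n R) (n → R) :=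
  ⟨Matrix.ext_iff_smul.mpr⟩

theorem CyclicVec.image_smul_eq_univ {r : ℕ} {m₁ m₂ : Matrix (Fin r) (Fin r) ℂ} {v : Fin r → ℂ}
    (hv : CyclicVec r m₁ m₂ v) :
    (· • v) '' (Algebra.adjoin ℂ {m₁, m₂} : Set (Matrix (Fin r) (Fin r) ℂ)) = Set.univ :=
  hv

/-- If a commuting pair `(m₁, m₂)` admits a cyclic vector, then the commutant of
`{m₁, m₂}` in `M_r(ℂ)` coincides with the unital subalgebra generated by `m₁, m₂`. -/
theorem stmt11 (r : ℕ) (hr : 1 ≤ r) (m₁ m₂ : Matrix (Fin r) (Fin r) ℂ)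
    (hcomm : m₁ * m₂ = m₂ * m₁) (v : Fin r → ℂ) (hv : CyclicVec r m₁ m₂ v)
    (c : Matrix (Fin r) (Fin r) ℂ) (hc₁ : c * m₁ = m₁ * c) (hc₂ : c * m₂ = m₂ * c) :
    c ∈ Algebra.adjoin ℂ {m₁, m₂} := by
  rw [← stmt11_general (pair_subset_centralizer_iff.mpr hcomm) hv.image_smul_eq_univ]
  simp [Subalgebra.mem_centralizer_iff, hc₁, hc₂]
end

section
/- Let r ≥ 1 and let C₂M_r(ℂ) ⊆ M_r(ℂ) × M_r(ℂ) denote the set of commuting pairs, with the subspace topology from the standard topology on M_r(ℂ) × M_r(ℂ). Then the subset of C₂M_r(ℂ) consisting of commuting pairs (m₁, m₂) that admit a cyclic vector v ∈ ℂʳ is open and dense in C₂M_r(ℂ). -/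
/-!
Openness: `v` is cyclic for a family `m` of `n × n` matrices exactly when some noncommutative
polynomials `w₁, …, wₙ` make `w₁(m) v, …, wₙ(m) v` a basis, that is, when one of the determinants
`det (wⱼ(m) v)ⱼ`, which are polynomial in the entries of `m`, does not vanish.

Density: as a `K[X]`-module with `X` acting as `A`, `Kⁿ` is isomorphic to a product
`S = ∏ᵢ K[X] ⧸ (qᵢ)`. Let `R` act on `S` by multiplication by an element of `∏ᵢ K` with distinct
coordinates. Lagrange interpolation in this element gives the idempotents of the product, so it
generates the algebra `S` together with the class of `X`, and `1 ∈ S` is a cyclic vector for the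
commuting pair `(A, R)`. For any `B` commuting with `A`, the line through `(A, B)` and `(A, R)`
consists of commuting pairs, and a determinant witnessing cyclicity at `(A, R)` restricts to a
nonzero polynomial on it. This has finitely many zeros, so `(A, B)` is a limit of commuting pairs
with a cyclic vector.
-/

open Matrix

/-- The commuting variety: the set of commuting pairs of `r × r` complex matrices, with
its subspace topology. -/
def commVariety (r : ℕ) : Set (Matrix (Fin r) (Fin r) ℂ × Matrix (Fin r) (Fin r) ℂ) :=
  {p | p.1 * p.2 = p.2 * p.1}

open Polynomial Topology

/-- `v` is a cyclic vector for a subset `s` of an `R`-algebra acting on `V`: the orbit of `v` under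
the unital `R`-subalgebra generated by `s` is all of `V`. -/
def IsCyclicVector (R : Type*) {A V : Type*} [CommSemiring R] [Semiring A] [Algebra R A]
    [SMul A V] (s : Set A) (v : V) : Prop :=
  ∀ w, ∃ a ∈ Algebra.adjoin R s, a • v = w

theorem IsCyclicVector.image {R A B V W : Type*} [CommSemiring R] [Semiring A] [Algebra R A]
    [Semiring B] [Algebra R B] [SMul A V] [SMul B W] {s : Set A} {v : V}
    (h : IsCyclicVector R s v) (φ : A →ₐ[R] B) {f : V → W} (hf : Function.Surjective f)
    (hφ : ∀ a, φ a • f v = f (a • v)) : IsCyclicVector R (φ '' s) (f v) := by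
  intro w
  obtain ⟨u, rfl⟩ := hf w
  obtain ⟨a, ha, rfl⟩ := h u
  refine ⟨φ a, ?_, hφ a⟩
  rw [← AlgHom.map_adjoin]
  exact ⟨a, ha, rfl⟩

theorem continuous_freeAlgebra_lift {R A ι : Type*} [CommSemiring R] [Semiring A] [Algebra R A]
    [TopologicalSpace A] [IsTopologicalSemiring A] (w : FreeAlgebra R ι) :
    Continuous fun m : ι → A => FreeAlgebra.lift R m w := by
  induction w with
  | grade0 c => simpa only [AlgHom.commutes] using continuous_const
  | grade1 i => simpa only [FreeAlgebra.lift_ι_apply] using continuous_apply i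
  | mul a b ha hb => simpa only [map_mul] using Continuous.fun_mul ha hb
  | add a b ha hb => simpa only [map_add] using Continuous.fun_add ha hb

section Determinant

variable {R S T K ι n : Type*} [CommRing R] [CommRing S] [Algebra R S] [CommRing T] [Algebra R T]
  [Field K] [Fintype n] [DecidableEq n]

/-- The determinant of the vectors `wⱼ(m) v`, where the noncommutative polynomials `wⱼ` are
evaluated at a family `m` of matrices. The coefficients of the `wⱼ` lie in a base ring `R` of the
ring `S` of matrix entries, so that one can change `S` while keeping the `wⱼ`. -/
noncomputable def orbitDet (w : n → FreeAlgebra R ι) (m : ι → Matrix n n S) (v : n → S) : S :=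
  (Matrix.of fun j => FreeAlgebra.lift R m (w j) *ᵥ v).det

theorem map_orbitDet (φ : S →ₐ[R] T) (w : n → FreeAlgebra R ι) (m : ι → Matrix n n S)
    (v : n → S) :
    φ (orbitDet w m v) = orbitDet w (fun i => φ.mapMatrix (m i)) (φ ∘ v) := by
  have hlift : FreeAlgebra.lift R (fun i => φ.mapMatrix (m i)) =
      φ.mapMatrix.comp (FreeAlgebra.lift R m) := by
    ext; simp
  rw [orbitDet, orbitDet, AlgHom.map_det, hlift]
  congr 1
  ext j i
  exact RingHom.map_mulVec (φ : S →+* T) _ v i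

theorem isCyclicVector_range_iff_exists_orbitDet_ne_zero {m : ι → Matrix n n K} {v : n → K} :
    IsCyclicVector K (Set.range m) v ↔ ∃ w : n → FreeAlgebra K ι, orbitDet w m v ≠ 0 := by
  rw [IsCyclicVector, Algebra.adjoin_range_eq_range_freeAlgebra_lift]
  constructor
  · intro h
    have hbasis (j : n) : ∃ w, FreeAlgebra.lift K m w *ᵥ v = Pi.single j 1 := by
      obtain ⟨_, ⟨w, rfl⟩, hw⟩ := h (Pi.single j 1)
      exact ⟨w, hw⟩
    choose w hw using hbasis
    refine ⟨w, ?_⟩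
    have hone : Matrix.of (fun j => FreeAlgebra.lift K m (w j) *ᵥ v) = 1 := by
      ext j i
      simp [hw, Matrix.one_apply, Pi.single_apply, eq_comm]
    simp [orbitDet, hone]
  · rintro ⟨w, hw⟩ y
    obtain ⟨c, rfl⟩ := Matrix.vecMul_surjective_iff_isUnit.2
      ((Matrix.isUnit_iff_isUnit_det _).2 (isUnit_iff_ne_zero.2 hw)) y
    refine ⟨_, ⟨∑ j, c j • w j, rfl⟩, ?_⟩
    ext i
    simp [Matrix.smul_eq_mulVec, Matrix.sum_mulVec, Matrix.smul_mulVec, Matrix.vecMul, dotProduct]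

theorem finite_setOf_not_isCyclicVector_lineMap {m₀ m₁ : ι → Matrix n n K} {v : n → K}
    (h : IsCyclicVector K (Set.range m₁) v) :
    {t : K | ¬ IsCyclicVector K (Set.range (AffineMap.lineMap m₀ m₁ t)) v}.Finite := by
  obtain ⟨w, hw⟩ := isCyclicVector_range_iff_exists_orbitDet_ne_zero.1 h
  let P : K[X] := orbitDet w
    (fun i => (X : K[X]) • (m₁ i - m₀ i).map C + (m₀ i).map C) (C ∘ v)
  have eval_P (t : K) : P.eval t = orbitDet w (AffineMap.lineMap m₀ m₁ t) v := by
    rw [← coe_aeval_eq_eval, map_orbitDet]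
    congr 1
    · ext i j k
      simp [AffineMap.lineMap_apply]
    · ext i
      simp
  have P_ne_zero : P ≠ 0 := by
    intro hP
    have := eval_P 1
    rw [hP, eval_zero, AffineMap.lineMap_apply_one] at this
    exact hw this.symm
  refine (finite_setOfPred_isRoot P_ne_zero).subset fun t ht => ?_
  by_contra hroot
  exact ht (isCyclicVector_range_iff_exists_orbitDet_ne_zero.2 ⟨w, eval_P t ▸ hroot⟩)

theorem continuous_orbitDet [TopologicalSpace S] [IsTopologicalRing S]
    (w : n → FreeAlgebra R ι) :
    Continuous fun p : (ι → Matrix n n S) × (n → S) => orbitDet w p.1 p.2 := by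
  refine Continuous.matrix_det (continuous_pi fun j => ?_)
  exact ((continuous_freeAlgebra_lift (w j)).comp continuous_fst).matrix_mulVec continuous_snd

theorem isOpen_setOf_isCyclicVector_range [TopologicalSpace K] [IsTopologicalRing K] [T1Space K] :
    IsOpen {p : (ι → Matrix n n K) × (n → K) | IsCyclicVector K (Set.range p.1) p.2} := by
  simp_rw [isCyclicVector_range_iff_exists_orbitDet_ne_zero, Set.ofPred_exists]
  exact isOpen_iUnion fun w => isOpen_ne.preimage (continuous_orbitDet w)

end Determinant

universe u

section Existence

variable {K : Type u} [Field K]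

theorem single_one_mem_adjoin_algebraMap {ι : Type*} [Finite ι] [DecidableEq ι] {S : ι → Type*}
    [∀ i, Semiring (S i)] [∀ i, Algebra K (S i)] {c : ι → K} (hc : Function.Injective c) (i : ι) :
    Pi.single i 1 ∈ Algebra.adjoin K {fun j => algebraMap K (S j) (c j)} := by
  have := Fintype.ofFinite ι
  convert aeval_mem_adjoin_singleton K _ (p := Lagrange.basis Finset.univ c i)
  ext j
  have hcoord : aeval (fun j => algebraMap K (S j) (c j)) (Lagrange.basis Finset.univ c i) j =
      algebraMap K (S j) ((Lagrange.basis Finset.univ c i).eval (c j)) := by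
    rw [aeval_pi_apply₂, aeval_algebraMap_apply_eq_algebraMap_eval]
  rw [hcoord]
  obtain rfl | hij := eq_or_ne j i
  · simp [Lagrange.eval_basis_self hc.injOn]
  · simp [hij, Lagrange.eval_basis_of_ne hij.symm]

theorem adjoin_pair_pi_eq_top {ι : Type*} [Finite ι] {S : ι → Type*}
    [∀ i, Semiring (S i)] [∀ i, Algebra K (S i)] {x : ∀ i, S i}
    (hx : ∀ i, Algebra.adjoin K {x i} = ⊤) {c : ι → K} (hc : Function.Injective c) :
    Algebra.adjoin K {x, fun i => algebraMap K (S i) (c i)} = ⊤ := by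
  classical
  have := Fintype.ofFinite ι
  rw [eq_top_iff]
  rintro s -
  have hs (i : ι) : ∃ p : K[X], aeval (x i) p = s i := by
    rw [← AlgHom.mem_range, ← Algebra.adjoin_singleton_eq_range_aeval, hx]
    trivial
  choose p hp using hs
  have hsum : s = ∑ i, aeval x (p i) * Pi.single i 1 := by
    ext j
    rw [Finset.sum_apply, Finset.sum_eq_single j (fun i _ hij => by simp [hij.symm]) (by simp)]
    simp [aeval_pi_apply₂, hp]
  rw [hsum]
  exact sum_mem fun i _ => mul_mem
    (Algebra.adjoin_mono (by simp) (aeval_mem_adjoin_singleton K x))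
    (Algebra.adjoin_mono (by simp) (single_one_mem_adjoin_algebraMap hc i))

theorem exists_commute_isCyclicVector_pair_of_linearEquiv {R S V : Type*} [CommSemiring R]
    [AddCommMonoid V] [Module R V] [CommSemiring S] [Algebra R S] (e : V ≃ₗ[R] S) {x y : S}
    (hxy : Algebra.adjoin R {x, y} = ⊤) {f : Module.End R V} (hf : ∀ v, e (f v) = x * e v) :
    ∃ g, Commute f g ∧ ∃ v : V, IsCyclicVector R {f, g} v := by
  let φ : S →ₐ[R] Module.End R V :=
    (e.symm.conjAlgEquiv R).toAlgHom.comp (Algebra.lmul R S)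
  have φ_apply (s : S) (v : V) : φ s v = e.symm (s * e v) := rfl
  have φ_x : φ x = f := by
    ext v
    rw [φ_apply, ← hf, e.symm_apply_apply]
  have one_cyclic : IsCyclicVector R {x, y} (1 : S) := fun s =>
    ⟨s, hxy ▸ Algebra.mem_top, mul_one s⟩
  refine ⟨φ y, φ_x ▸ (Commute.all x y).map φ, e.symm 1, ?_⟩
  rw [← φ_x, ← Set.image_pair]
  refine one_cyclic.image φ e.symm.surjective fun s => ?_
  rw [Module.End.smul_def, φ_apply, e.apply_symm_apply, smul_eq_mul]

theorem exists_linearEquiv_pi_adjoinRoot {V : Type*} [AddCommGroup V] [Module K V]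
    [FiniteDimensional K V] (f : Module.End K V) :
    ∃ (ι : Type u) (_ : Fintype ι) (q : ι → K[X]) (e : V ≃ₗ[K] ∀ i, AdjoinRoot (q i)),
      ∀ v, e (f v) = (fun i => AdjoinRoot.root (q i)) * e v := by
  classical
  obtain ⟨ι, hι, p, -, k, ⟨e⟩⟩ := Module.equiv_directSum_of_isTorsion
    (Module.AEval.isTorsion_of_finiteDimensional K V f)
  let e' : Module.AEval' f ≃ₗ[K[X]] ∀ i, K[X] ⧸ Ideal.span {p i ^ k i} :=
    e.trans (DirectSum.linearEquivFunOnFintype K[X] ι _)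
  refine ⟨ι, hι, fun i => p i ^ k i,
    (Module.AEval'.of f).trans (e'.restrictScalars K), fun v => ?_⟩
  change e' (Module.AEval'.of f (f v)) = _ * e' (Module.AEval'.of f v)
  rw [← Module.AEval'.X_smul_of, map_smul]
  ext i
  exact Algebra.smul_def (A := K[X] ⧸ Ideal.span {p i ^ k i}) (X : K[X]) _

theorem exists_commute_isCyclicVector_pair [Infinite K] {V : Type*} [AddCommGroup V] [Module K V]
    [FiniteDimensional K V] (f : Module.End K V) :
    ∃ g, Commute f g ∧ ∃ v : V, IsCyclicVector K {f, g} v := by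
  obtain ⟨ι, _, q, e, he⟩ := exists_linearEquiv_pi_adjoinRoot f
  let c : ι ↪ K :=
    ((Fintype.equivFin ι).toEmbedding.trans Fin.valEmbedding).trans (Infinite.natEmbedding K)
  exact exists_commute_isCyclicVector_pair_of_linearEquiv e
    (adjoin_pair_pi_eq_top (fun _ => AdjoinRoot.adjoinRoot_eq_top) c.injective) he

theorem exists_commute_isCyclicVector_pair_matrix [Infinite K] {n : Type*} [Fintype n]
    [DecidableEq n] (A : Matrix n n K) :
    ∃ R, Commute A R ∧ ∃ v : n → K, IsCyclicVector K {A, R} v := by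
  obtain ⟨g, hAg, v, hv⟩ := exists_commute_isCyclicVector_pair (Matrix.toLinAlgEquiv' A)
  let φ := (LinearMap.toMatrixAlgEquiv' : _ ≃ₐ[K] Matrix n n K)
  have φ_A : φ (Matrix.toLinAlgEquiv' A) = A := LinearMap.toMatrixAlgEquiv'_toLinAlgEquiv' A
  refine ⟨φ g, φ_A ▸ hAg.map φ, v, ?_⟩
  rw [← φ_A, ← Set.image_pair]
  exact hv.image φ.toAlgHom Function.surjective_id fun a => LinearMap.toMatrix'_mulVec a v

end Existence

theorem eventually_isCyclicVector_pair_lineMap {K n : Type*} [Field K] [TopologicalSpace K]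
    [T1Space K] [Fintype n] [DecidableEq n] {A R : Matrix n n K} {v : n → K}
    (h : IsCyclicVector K {A, R} v) (B : Matrix n n K) :
    ∀ᶠ t in 𝓝[≠] (0 : K), IsCyclicVector K {A, AffineMap.lineMap B R t} v := by
  have hline (t : K) : AffineMap.lineMap ![A, B] ![A, R] t = ![A, AffineMap.lineMap B R t] := by
    ext i
    fin_cases i <;> simp [AffineMap.pi_lineMap_apply]
  rw [← Matrix.range_cons_cons_empty _ _ ![]] at h
  have hfin := finite_setOf_not_isCyclicVector_lineMap (m₀ := ![A, B]) h
  simp_rw [hline, Matrix.range_cons_cons_empty] at hfin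
  filter_upwards [nhdsNE_le_cofinite 0 hfin.compl_mem_cofinite] with t ht
  exact not_not.1 ht

section CommutingVariety

variable {K n : Type*} [Field K] [TopologicalSpace K] [IsTopologicalRing K] [T1Space K]
  [Fintype n] [DecidableEq n]

theorem isOpen_setOf_exists_isCyclicVector_pair :
    IsOpen {p : Matrix n n K × Matrix n n K | ∃ v : n → K, IsCyclicVector K {p.1, p.2} v} := by
  simp_rw [Set.ofPred_exists, ← Matrix.range_cons_cons_empty _ _ ![]]
  refine isOpen_iUnion fun v => ?_
  have hcont : Continuous fun p : Matrix n n K × Matrix n n K => (![p.1, p.2], v) := by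
    fun_prop
  exact isOpen_setOf_isCyclicVector_range.preimage hcont

theorem stmt15_general [(𝓝[≠] (0 : K)).NeBot] :
    IsOpen {p : {p : Matrix n n K × Matrix n n K | p.1 * p.2 = p.2 * p.1} |
        ∃ v : n → K, IsCyclicVector K {p.1.1, p.1.2} v} ∧
      Dense {p : {p : Matrix n n K × Matrix n n K | p.1 * p.2 = p.2 * p.1} |
        ∃ v : n → K, IsCyclicVector K {p.1.1, p.1.2} v} := by
  refine ⟨isOpen_setOf_exists_isCyclicVector_pair.preimage continuous_subtype_val, ?_⟩
  rintro ⟨⟨A, B⟩, hAB : Commute A B⟩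
  have : Infinite K :=
    Set.infinite_univ_iff.1 (infinite_of_mem_nhds (0 : K) Filter.univ_mem)
  obtain ⟨R, hAR, v, hv⟩ := exists_commute_isCyclicVector_pair_matrix A
  have hline (t : K) : Commute A (AffineMap.lineMap B R t) :=
    ((hAR.sub_right hAB).smul_right t).add_right hAB
  let γ (t : K) : {p : Matrix n n K × Matrix n n K | p.1 * p.2 = p.2 * p.1} :=
    ⟨(A, AffineMap.lineMap B R t), hline t⟩
  have hγ : Continuous γ :=
    (continuous_const.prodMk AffineMap.lineMap_continuous).subtype_mk _
  have hγ₀ : γ 0 = ⟨(A, B), hAB⟩ := by simp [γ]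
  rw [← hγ₀]
  refine mem_closure_of_tendsto (b := 𝓝[≠] 0) (hγ.continuousAt.mono_left nhdsWithin_le_nhds) ?_
  filter_upwards [eventually_isCyclicVector_pair_lineMap hv B] with t ht
  exact ⟨v, ht⟩

end CommutingVariety

theorem cyclicVec_iff_isCyclicVector {r : ℕ} {m₁ m₂ : Matrix (Fin r) (Fin r) ℂ} {v : Fin r → ℂ} :
    CyclicVec r m₁ m₂ v ↔ IsCyclicVector ℂ {m₁, m₂} v :=
  Set.eq_univ_iff_forall

/-- Within the commuting variety `C₂M_r(ℂ)`, the locus of commuting pairs admitting a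
cyclic vector is open and dense (in the subspace topology). -/
theorem stmt15 (r : ℕ) (hr : 1 ≤ r) :
    IsOpen {p : commVariety r | ∃ v : Fin r → ℂ, CyclicVec r p.1.1 p.1.2 v} ∧
      Dense {p : commVariety r | ∃ v : Fin r → ℂ, CyclicVec r p.1.1 p.1.2 v} := by
  simp_rw [cyclicVec_iff_isCyclicVector]
  exact stmt15_general (K := ℂ) (n := Fin r)
end
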